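/- Let p and q be integers with 2 ≤ p ≤ q and m = gcd(p,q) < p (i.e. p does not divide q), and set ν = (p−1)(q−1) and T = {(p,0),(0,q)}. Then for every finite set P ⊆ ℕ², either ν(T ∪ P) = ν or ν(T ∪ P) ≤ ν − m; in other words, no integer strictly between ν − m and ν is attainable from T (the first jump of Newton numbers equals m). -/

import Mathlib

open Pointwise MeasureTheory

/-- The Newton polyhedron `Γ₊(T)`: the Minkowski sum of the convex hull of the
(real images of the) lattice points of `T` with the nonnegative quadrant. -/
noncomputable def GammaPlus (T : Finset (ℕ × ℕ)) : Set (ℝ × ℝ) :=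
  convexHull ℝ ((fun v : ℕ × ℕ => ((v.1 : ℝ), (v.2 : ℝ))) '' (T : Set (ℕ × ℕ))) +
    {v : ℝ × ℝ | 0 ≤ v.1 ∧ 0 ≤ v.2}

/-- `a(T)`: the smallest `x` with `(x,0) ∈ Γ₊(T)`. -/
noncomputable def axisA (T : Finset (ℕ × ℕ)) : ℝ :=
  sInf {x : ℝ | (x, (0 : ℝ)) ∈ GammaPlus T}

/-- `b(T)`: the smallest `y` with `(0,y) ∈ Γ₊(T)`. -/
noncomputable def axisB (T : Finset (ℕ × ℕ)) : ℝ :=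
  sInf {y : ℝ | ((0 : ℝ), y) ∈ GammaPlus T}

/-- `S(T)`: the Lebesgue area of the part of the nonnegative quadrant not in `Γ₊(T)`. -/
noncomputable def areaS (T : Finset (ℕ × ℕ)) : ℝ :=
  (volume ({v : ℝ × ℝ | 0 ≤ v.1 ∧ 0 ≤ v.2} \ GammaPlus T)).toReal

/-- The Newton number `ν(T) = 2 S(T) - a(T) - b(T) + 1`. -/
noncomputable def newtonNumber (T : Finset (ℕ × ℕ)) : ℝ :=
  2 * areaS T - axisA T - axisB T + 1

/-- An integer `n` is attainable from `T` if `n = ν(T ∪ P)` for some finite `P ⊆ ℕ²`. -/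
def Attainable (T : Finset (ℕ × ℕ)) (n : ℤ) : Prop :=
  ∃ P : Finset (ℕ × ℕ), (n : ℝ) = newtonNumber (T ∪ P)

theorem mem_Gamma (T : Finset (ℕ × ℕ)) (v w : ℕ × ℕ) (hv : v ∈ T) (hw : w ∈ T) (t x y : ℝ)
    (h0 : 0 ≤ t) (h1 : t ≤ 1) (hx : t * v.1 + (1 - t) * w.1 ≤ x)
    (hy : t * v.2 + (1 - t) * w.2 ≤ y) : (x, y) ∈ GammaPlus T := by
  unfold GammaPlus
  refine Set.mem_add.2 ⟨(t * v.1 + (1 - t) * w.1, t * v.2 + (1 - t) * w.2), ?_,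
    (x - (t * v.1 + (1 - t) * w.1), y - (t * v.2 + (1 - t) * w.2)), ?_, ?_⟩
  · have hc := convex_convexHull ℝ
      ((fun v : ℕ × ℕ => ((v.1 : ℝ), (v.2 : ℝ))) '' (T : Set (ℕ × ℕ)))
    have := hc (subset_convexHull ℝ _ ⟨v, hv, rfl⟩) (subset_convexHull ℝ _ ⟨w, hw, rfl⟩)
      h0 (sub_nonneg.2 h1) (by ring)
    simpa using this
  · exact ⟨sub_nonneg.2 hx, sub_nonneg.2 hy⟩
  · ext <;> simp

theorem Gamma_half (T : Finset (ℕ × ℕ)) (α β c : ℝ) (hα : 0 ≤ α) (hβ : 0 ≤ β)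
    (h : ∀ v ∈ T, c ≤ α * v.1 + β * v.2) (z : ℝ × ℝ) (hz : z ∈ GammaPlus T) :
    c ≤ α * z.1 + β * z.2 := by
  obtain ⟨u, hu, w, hw, rfl⟩ := Set.mem_add.1 hz
  have hconv : Convex ℝ {z : ℝ × ℝ | c ≤ α * z.1 + β * z.2} := by
    intro x hx y hy s t hs ht hst
    simp only [Set.mem_setOf_eq, Prod.fst_add, Prod.smul_fst, smul_eq_mul, Prod.snd_add,
      Prod.smul_snd] at *
    have e : t = 1 - s := by linarith
    subst e
    nlinarith [mul_le_mul_of_nonneg_left hx hs, mul_le_mul_of_nonneg_left hy ht]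
  have hu' : c ≤ α * u.1 + β * u.2 := by
    refine convexHull_min ?_ hconv hu
    rintro _ ⟨v, hv, rfl⟩
    exact h v hv
  have := mul_nonneg hα hw.1
  have := mul_nonneg hβ hw.2
  simp only [Prod.fst_add, Prod.snd_add]
  linarith

theorem axisA_eq (T : Finset (ℕ × ℕ)) (a : ℕ) (ha : (a, 0) ∈ T)
    (h : ∀ x, (x, 0) ∈ T → a ≤ x) : axisA T = a := by
  refine IsLeast.csInf_eq ⟨?_, ?_⟩
  · exact mem_Gamma T _ _ ha ha 1 _ _ (by simp) le_rfl (by simp) (by simp)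
  · intro x hx
    have := Gamma_half T 1 a a (by simp) (by simp) ?_ _ hx
    · simpa using this
    · rintro ⟨i, j⟩ hv
      rcases Nat.eq_zero_or_pos j with rfl | hj
      · have := h i hv
        simpa using this
      · have : a ≤ 1 * i + a * j := by nlinarith
        exact_mod_cast this

theorem axisB_eq (T : Finset (ℕ × ℕ)) (b : ℕ) (hb : (0, b) ∈ T)
    (h : ∀ y, (0, y) ∈ T → b ≤ y) : axisB T = b := by
  refine IsLeast.csInf_eq ⟨?_, ?_⟩
  · exact mem_Gamma T _ _ hb hb 1 _ _ (by simp) le_rfl (by simp) (by simp)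
  · intro x hx
    have := Gamma_half T b 1 b (by simp) (by simp) ?_ _ hx
    · simpa using this
    · rintro ⟨i, j⟩ hv
      rcases Nat.eq_zero_or_pos i with rfl | hj
      · have := h j hv
        simpa using this
      · have : b ≤ b * i + 1 * j := by nlinarith
        exact_mod_cast this

def trapz (s t h k : ℝ) : Set (ℝ × ℝ) :=
  {v | s ≤ v.1 ∧ v.1 ≤ t ∧ 0 ≤ v.2 ∧ v.2 < h + k * (v.1 - s)}

theorem vol_trapz (s t h k : ℝ) (hst : s ≤ t) (h0 : 0 ≤ h) (h1 : 0 ≤ h + k * (t - s)) :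
    volume (trapz s t h k) = ENNReal.ofReal (h * (t - s) + k * (t - s) ^ 2 / 2) := by
  have hreg : volume (regionBetween (fun _ : ℝ => (0 : ℝ)) (fun x => h + k * (x - s))
      (Set.Icc s t)) = ENNReal.ofReal (h * (t - s) + k * (t - s) ^ 2 / 2) := by
    rw [Measure.volume_eq_prod, volume_regionBetween_eq_integral]
    · congr 1
      rw [integral_Icc_eq_integral_Ioc, ← intervalIntegral.integral_of_le hst]
      have : ∀ x ∈ Set.uIcc s t, HasDerivAt (fun x => h * (x - s) + k * (x - s) ^ 2 / 2)
          (((fun x => h + k * (x - s)) - fun _ : ℝ => (0 : ℝ)) x) x := by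
        intro x _
        have e := (hasDerivAt_id x).sub_const s
        have := (e.const_mul h).add (((e.pow 2).const_mul k).div_const 2)
        refine (this.congr_deriv ?_)
        simp
        ring
      rw [intervalIntegral.integral_eq_sub_of_hasDerivAt this]
      · simp
      · apply Continuous.intervalIntegrable
        simp only [Pi.sub_def]
        fun_prop
    · exact (continuous_const : Continuous fun _ : ℝ => (0 : ℝ)).continuousOn.integrableOn_Icc
    · exact (by fun_prop : Continuous fun x : ℝ => h + k * (x - s)).continuousOn.integrableOn_Icc
    · exact measurableSet_Icc
    · intro x hx
      obtain ⟨hx1, hx2⟩ := hx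
      show 0 ≤ h + k * (x - s)
      rcases le_total 0 k with hk | hk
      · have := mul_nonneg hk (sub_nonneg.2 hx1)
        linarith
      · nlinarith
  have hline : volume ((Set.univ : Set ℝ) ×ˢ ({0} : Set ℝ)) = 0 := by
    rw [Measure.volume_eq_prod, Measure.prod_prod]; simp
  rw [← hreg]
  apply le_antisymm
  · calc _ ≤ volume (regionBetween (fun _ : ℝ => (0 : ℝ)) (fun x => h + k * (x - s))
      (Set.Icc s t) ∪ (Set.univ : Set ℝ) ×ˢ ({0} : Set ℝ)) := by
          apply measure_mono
          rintro ⟨x, y⟩ ⟨a1, a2, a3, a4⟩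
          rcases a3.eq_or_lt with e | e
          · right
            simp only [Set.mem_prod, Set.mem_univ, Set.mem_singleton_iff, true_and]
            exact e.symm
          · left
            exact ⟨⟨a1, a2⟩, e, a4⟩
      _ ≤ _ := by
          refine (measure_union_le _ _).trans ?_
          rw [hline, add_zero]
  · apply measure_mono
    rintro ⟨x, y⟩ ⟨⟨a1, a2⟩, a3, a4⟩
    exact ⟨a1, a2, a3.le, a4⟩

theorem compl_sub (T : Finset (ℕ × ℕ)) (a b : ℕ) (ha0 : 0 < a)
    (ha : (a, 0) ∈ T) (hb : (0, b) ∈ T) :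
    {v : ℝ × ℝ | 0 ≤ v.1 ∧ 0 ≤ v.2} \ GammaPlus T ⊆ trapz 0 a b (-b / a) := by
  rintro ⟨x, y⟩ ⟨⟨hx, hy⟩, hn⟩
  simp only at hx hy
  have ha0' : (0 : ℝ) < a := by exact_mod_cast ha0
  have hxa : x ≤ a := by
    by_contra hc
    push Not at hc
    exact hn (mem_Gamma T _ _ ha ha 1 _ _ (by simp) le_rfl (by simp; linarith) (by simpa using hy))
  refine ⟨hx, hxa, hy, ?_⟩
  by_contra hc
  push Not at hc
  simp only at hc
  refine hn (mem_Gamma T _ _ ha hb (x / a) _ _ (by positivity) ((div_le_one ha0').2 hxa) ?_ ?_)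
  · simp; field_simp; exact le_rfl
  · simp only [Nat.cast_zero, mul_zero, zero_add]
    refine le_trans (le_of_eq ?_) hc
    field_simp; ring

theorem area_tri (a b : ℕ) (ha0 : 0 < a) :
    volume (trapz 0 a b (-b / a)) = ENNReal.ofReal (a * b / 2) := by
  have ha0' : (0 : ℝ) < a := by exact_mod_cast ha0
  rw [vol_trapz]
  · congr 1; field_simp; ring
  · exact ha0'.le
  · simp
  · apply le_of_eq; field_simp; ring

theorem area_le (T : Finset (ℕ × ℕ)) (a b : ℕ) (ha0 : 0 < a)
    (ha : (a, 0) ∈ T) (hb : (0, b) ∈ T) : areaS T ≤ a * b / 2 := by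
  unfold areaS
  have := measure_mono (μ := volume) (compl_sub T a b ha0 ha hb)
  rw [area_tri a b ha0] at this
  exact ENNReal.toReal_le_of_le_ofReal (by positivity) this

theorem area_eq (T : Finset (ℕ × ℕ)) (a b : ℕ) (ha0 : 0 < a)
    (ha : (a, 0) ∈ T) (hb : (0, b) ∈ T)
    (h : ∀ v ∈ T, a * b ≤ b * v.1 + a * v.2) : areaS T = a * b / 2 := by
  have ha0' : (0 : ℝ) < a := by exact_mod_cast ha0
  unfold areaS
  have : {v : ℝ × ℝ | 0 ≤ v.1 ∧ 0 ≤ v.2} \ GammaPlus T = trapz 0 a b (-b / a) := by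
    apply subset_antisymm (compl_sub T a b ha0 ha hb)
    rintro ⟨x, y⟩ ⟨h1, h2, h3, h4⟩
    refine ⟨⟨h1, h3⟩, fun hG => ?_⟩
    have := Gamma_half T b a (a * b) (by simp) (by simp) (fun v hv => by exact_mod_cast h v hv) _ hG
    simp only at this h4
    have e : (b : ℝ) + -b / a * (x - 0) = (a * b - b * x) / a := by field_simp; ring
    rw [e, lt_div_iff₀ ha0'] at h4
    linarith
  rw [this, area_tri a b ha0, ENNReal.toReal_ofReal (by positivity)]

theorem area_quad (T : Finset (ℕ × ℕ)) (p q i j : ℕ) (hi : 0 < i) (hip : i < p)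
    (ha : (p, 0) ∈ T) (hb : (0, q) ∈ T) (hv : (i, j) ∈ T) :
    areaS T ≤ (q * i + p * j) / 2 := by
  have hi' : (0 : ℝ) < i := by exact_mod_cast hi
  have hip' : (0 : ℝ) < p - i := by
    have : (i : ℝ) < p := by exact_mod_cast hip
    linarith
  have hsub : {v : ℝ × ℝ | 0 ≤ v.1 ∧ 0 ≤ v.2} \ GammaPlus T ⊆
      trapz 0 i q ((j - q) / i) ∪ trapz i p j (-j / (p - i)) := by
    rintro ⟨x, y⟩ ⟨⟨hx, hy⟩, hn⟩
    simp only at hx hy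
    have hxa : x ≤ p := by
      by_contra hc
      push Not at hc
      exact hn (mem_Gamma T _ _ ha ha 1 _ _ (by simp) le_rfl (by simp; linarith)
        (by simpa using hy))
    rcases le_total x i with hxi | hxi
    · left
      refine ⟨hx, hxi, hy, ?_⟩
      by_contra hc
      push Not at hc
      simp only at hc
      refine hn (mem_Gamma T _ _ hv hb (x / i) _ _ (by positivity)
        ((div_le_one hi').2 hxi) ?_ ?_)
      · simp; field_simp; exact le_rfl
      · refine le_trans (le_of_eq ?_) hc
        field_simp; ring
    · right
      refine ⟨hxi, hxa, hy, ?_⟩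
      by_contra hc
      push Not at hc
      simp only at hc
      refine hn (mem_Gamma T _ _ ha hv ((x - i) / (p - i)) _ _
        (div_nonneg (by linarith) hip'.le) ((div_le_one hip').2 (by linarith)) ?_ ?_)
      · simp only; apply le_of_eq; field_simp; ring
      · refine le_trans (le_of_eq ?_) hc
        simp only [Nat.cast_zero]
        field_simp; ring
  unfold areaS
  have := (measure_mono (μ := volume) hsub).trans (measure_union_le _ _)
  rw [vol_trapz _ _ _ _ hi'.le (by simp) (by
      have : (q : ℝ) + (j - q) / i * (i - 0) = j := by field_simp; ring
      rw [this]; simp), vol_trapz _ _ _ _ (by linarith) (by simp) (by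
      apply le_of_eq; field_simp; ring)] at this
  have e1 : (q : ℝ) * (i - 0) + (j - q) / i * (i - 0) ^ 2 / 2 = i * (q + j) / 2 := by
    field_simp; ring
  have e2 : (j : ℝ) * (p - i) + -j / (p - i) * (p - i) ^ 2 / 2 = j * (p - i) / 2 := by
    field_simp; ring
  have n2 : 0 ≤ (j : ℝ) * (p - i) / 2 := by positivity
  rw [e1, e2, ← ENNReal.ofReal_add (by positivity) n2] at this
  refine (ENNReal.toReal_le_of_le_ofReal (by positivity) this).trans (le_of_eq ?_)
  ring

/-- the first jump of Newton numbers of `tr(p,q)` equals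
`m = gcd(p,q)` when `m < p`: no value strictly between `ν - m` and `ν` occurs. -/
theorem stmt_3 (p q m : ℕ) (ν : ℤ)
    (hp : 2 ≤ p) (hpq : p ≤ q) (hm : m = Nat.gcd p q) (hmp : m < p)
    (hν : ν = ((p : ℤ) - 1) * ((q : ℤ) - 1)) :
    ∀ P : Finset (ℕ × ℕ),
      newtonNumber ({(p, 0), (0, q)} ∪ P) = (ν : ℝ) ∨
      newtonNumber ({(p, 0), (0, q)} ∪ P) ≤ (ν : ℝ) - (m : ℝ) := by
  intro P
  have hpT : (p, 0) ∈ ({(p, 0), (0, q)} ∪ P : Finset (ℕ × ℕ)) := by simp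
  have hqT : (0, q) ∈ ({(p, 0), (0, q)} ∪ P : Finset (ℕ × ℕ)) := by simp
  generalize ({(p, 0), (0, q)} ∪ P : Finset (ℕ × ℕ)) = T at *
  have hne : p < q := by
    rcases hpq.eq_or_lt with e | e
    · subst e; simp at hm; omega
    · exact e
  have exA : ∃ x, (x, 0) ∈ T := ⟨p, hpT⟩
  have exB : ∃ y, (0, y) ∈ T := ⟨q, hqT⟩
  obtain ⟨a, ha, hamin⟩ : ∃ a, (a, 0) ∈ T ∧ ∀ x, (x, 0) ∈ T → a ≤ x :=
    ⟨Nat.find exA, Nat.find_spec exA, fun x hx => Nat.find_min' exA hx⟩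
  obtain ⟨b, hb, hbmin⟩ : ∃ b, (0, b) ∈ T ∧ ∀ x, (0, x) ∈ T → b ≤ x :=
    ⟨Nat.find exB, Nat.find_spec exB, fun x hx => Nat.find_min' exB hx⟩
  have hA := axisA_eq T a ha hamin
  have hB := axisB_eq T b hb hbmin
  have hap := hamin p hpT
  have hbq := hbmin q hqT
  have hν' : (ν : ℝ) = ((p : ℝ) - 1) * ((q : ℝ) - 1) := by rw [hν]; push_cast; ring
  have hp' : (2 : ℝ) ≤ p := by exact_mod_cast hp
  have hne' : (p : ℝ) + 1 ≤ q := by exact_mod_cast hne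
  have hmp' : (m : ℝ) + 1 ≤ p := by exact_mod_cast hmp
  have hap' : (a : ℝ) ≤ p := by exact_mod_cast hap
  have hbq' : (b : ℝ) ≤ q := by exact_mod_cast hbq
  unfold newtonNumber
  rw [hA, hB, hν']
  by_cases h00 : (0, 0) ∈ T
  · right
    have ha0 : a = 0 := by have := hamin 0 h00; omega
    have hb0 : b = 0 := by have := hbmin 0 h00; omega
    have hS : areaS T = 0 := by
      unfold areaS
      have : {v : ℝ × ℝ | 0 ≤ v.1 ∧ 0 ≤ v.2} \ GammaPlus T = ∅ := by
        rw [Set.diff_eq_empty]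
        rintro ⟨x, y⟩ ⟨hx, hy⟩
        exact mem_Gamma T _ _ h00 h00 1 _ _ (by simp) le_rfl (by simpa using hx)
          (by simpa using hy)
      rw [this]; simp
    rw [hS, ha0, hb0]
    push_cast
    nlinarith
  have ha0 : 0 < a := by
    rcases Nat.eq_zero_or_pos a with e | e
    · subst e; exact absurd ha h00
    · exact e
  have hb0 : 0 < b := by
    rcases Nat.eq_zero_or_pos b with e | e
    · subst e; exact absurd hb h00
    · exact e
  have ha1 : (1 : ℝ) ≤ a := by exact_mod_cast ha0
  have hb1 : (1 : ℝ) ≤ b := by exact_mod_cast hb0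
  have hle := area_le T a b ha0 ha hb
  rcases hap.lt_or_eq with hlt | rfl
  · right
    have : (a : ℝ) + 1 ≤ p := by exact_mod_cast hlt
    nlinarith
  rcases hbq.lt_or_eq with hlt | rfl
  · right
    have : (b : ℝ) + 1 ≤ q := by exact_mod_cast hlt
    nlinarith
  by_cases hall : ∀ v ∈ T, a * b ≤ b * v.1 + a * v.2
  · left
    rw [area_eq T a b ha0 ha hb hall]
    ring
  · right
    push Not at hall
    obtain ⟨⟨i, j⟩, hv, hlt⟩ := hall
    simp only at hlt
    have hi : 0 < i := by
      rcases Nat.eq_zero_or_pos i with e | e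
      · subst e
        have := hbmin j hv
        nlinarith
      · exact e
    have hia : i < a := by
      by_contra hc
      push Not at hc
      nlinarith
    have hq := area_quad T a b i j hi hia ha hb hv
    have hdvd : m ∣ a * b - (b * i + a * j) := by
      have h1 : m ∣ a := hm ▸ Nat.gcd_dvd_left a b
      have h2 : m ∣ b := hm ▸ Nat.gcd_dvd_right a b
      exact Nat.dvd_sub (h1.mul_right _) (dvd_add (h2.mul_right _) (h1.mul_right _))
    have hmle := Nat.le_of_dvd (by omega) hdvd
    have hmle' : m + (b * i + a * j) ≤ a * b := by omega
    have : (m : ℝ) + (b * i + a * j) ≤ a * b := by exact_mod_cast hmle'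
    nlinarith
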